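/- arXiv:1604.00316 — 4 statements merged into one kernel-verified Lean document; each statement's English description precedes it below -/
import Mathlib

section
/- Let p be a positive rational number with √p irrational, and let x₁ = a₁ + b₁√p, …, xₙ = aₙ + bₙ√p where each xᵢ > 0 and all aᵢ, bᵢ are rational. Suppose aᵢ − bᵢ√p > 0 for every i ∈ {1, …, n} (so each aᵢ > 0). Then a positive real number z belongs to B(x₁, …, xₙ) if and only if z = e + f√p with e, f ∈ ℚ, e > 0, and |f|/e ≤ max_{1 ≤ i ≤ n} |bᵢ|/aᵢ. -/
/-- `R` is an axis-parallel closed rectangle with side lengths `w` (horizontal)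
and `h` (vertical), both positive. -/
def IsRect (R : Set (ℝ × ℝ)) (w h : ℝ) : Prop :=
  0 < w ∧ 0 < h ∧ ∃ x y : ℝ, R = Set.Icc x (x + w) ×ˢ Set.Icc y (y + h)

/-- The rectangle `R` is tiled by finitely many axis-parallel rectangles, each of
whose side ratios belongs to `ratios`: the tiles cover `R` and have pairwise
disjoint interiors. -/
def TiledBy (R : Set (ℝ × ℝ)) (ratios : Set ℝ) : Prop :=
  ∃ (m : ℕ) (T : Fin m → Set (ℝ × ℝ)) (w h : Fin m → ℝ),
    (∀ i, IsRect (T i) (w i) (h i)) ∧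
    (∀ i, w i / h i ∈ ratios ∨ h i / w i ∈ ratios) ∧
    (⋃ i, T i) = R ∧
    Pairwise fun i j => Disjoint (interior (T i)) (interior (T j))

/-- `BSet ratios` is the set of positive reals `z` such that some axis-parallel
rectangle with side ratio `z` can be tiled by finitely many axis-parallel
rectangles each of whose side ratio belongs to `ratios`. -/
def BSet (ratios : Set ℝ) : Set ℝ :=
  {z | ∃ (W H : ℝ) (R : Set (ℝ × ℝ)),
    IsRect R W H ∧ (z = W / H ∨ z = H / W) ∧ TiledBy R ratios}

/-! For a tiling of a `W × H` rectangle by `wᵢ × hᵢ` rectangles and additive `φ, ψ : ℝ → ℝ` one has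
`∑ φ(wᵢ) ψ(hᵢ) = φ(W) ψ(H)`. Let `K = ℚ(√p)` and let `k` be the ratio of the
tiled rectangle. Taking for `φ` and `ψ` a suitable `K`-linear functional `ℝ → K` followed by one of
the two embeddings of `K` in `ℝ` shows first that `k ∈ K`, and then that there are tile ratios
`sᵢ` and `lᵢ ∈ K` with `∑ (τ(sᵢ) + τ'(sᵢ)) τ(lᵢ) τ'(lᵢ) = τ(k) + τ'(k)` for any embeddings `τ, τ'`.
By Cauchy–Schwarz norm / trace² of `k` is at least the minimum of norm / trace² over the tiles, and
norm / trace² of `a + b√p` is `(1 - p (b / a)²) / 4`.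

Conversely, the ratios that can be tiled form an additive monoid closed under inverses and hence
under multiplication by nonnegative rationals. Thus along with `x = a + b√p` it contains the
conjugate `a - b√p = N(x) x⁻¹`, and `e + f√p` is a nonnegative rational combination of the two
precisely when `|f| / e ≤ |b| / a`. -/

open Set MeasureTheory Polynomial

section Additivity

theorem setIntegral_Icc_derivative_mul_derivative (P Q : ℝ[X]) {a b : ℝ × ℝ} (hab : a ≤ b) :
    ∫ z in Icc a b, (derivative P).eval z.1 * (derivative Q).eval z.2 =
      (P.eval b.1 - P.eval a.1) * (Q.eval b.2 - Q.eval a.2) := by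
  have integral_derivative (F : ℝ[X]) {s t : ℝ} (hst : s ≤ t) :
      ∫ u in Icc s t, (derivative F).eval u = F.eval t - F.eval s := by
    rw [integral_Icc_eq_integral_Ioc, ← intervalIntegral.integral_of_le hst]
    exact intervalIntegral.integral_eq_sub_of_hasDerivAt (fun u _ => F.hasDerivAt u)
      ((derivative F).continuous.intervalIntegrable s t)
  rw [Icc_prod_eq, Measure.volume_eq_prod, setIntegral_prod_mul (fun u => (derivative P).eval u)
    (fun u => (derivative Q).eval u), integral_derivative P hab.1, integral_derivative Q hab.2]

theorem exists_polynomial_eqOn {F : Type*} [Field F] (s : Finset F) (φ : F → F) :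
    ∃ P : F[X], ∀ t ∈ s, P.eval t = φ t := by
  classical
  exact ⟨Lagrange.interpolate s id φ, fun _ ht =>
    Lagrange.eval_interpolate_at_node φ (v := id) (injOn_id (s : Set F)) ht⟩

variable {ι : Type*} [Fintype ι]

theorem sum_setIntegral_of_tiling {a b : ι → ℝ × ℝ} {A B : ℝ × ℝ}
    (hU : ⋃ i, Icc (a i) (b i) = Icc A B)
    (hD : Pairwise fun i j => Disjoint (interior (Icc (a i) (b i))) (interior (Icc (a j) (b j))))
    {f : ℝ × ℝ → ℝ} (hf : Continuous f) :
    ∑ i, ∫ z in Icc (a i) (b i), f z = ∫ z in Icc A B, f z := by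
  have interior_ae_eq (i : ι) :
      interior (Icc (a i) (b i)) =ᵐ[volume] Icc (a i) (b i) :=
    interior_ae_eq_of_null_frontier ((convex_Icc (a i) (b i)).addHaar_frontier volume)
  have aedisjoint : Pairwise (Function.onFun (AEDisjoint volume) fun i => Icc (a i) (b i)) :=
    fun i j hij => (hD hij).aedisjoint.congr (interior_ae_eq i).symm (interior_ae_eq j).symm
  rw [← hU, integral_iUnion_ae (fun i => measurableSet_Icc.nullMeasurableSet) aedisjoint
    (hU ▸ hf.integrableOn_Icc), tsum_fintype]

/-- Only the values at the finitely many corner coordinates matter, so arbitrary functions may be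
replaced by polynomials, for which both sides are integrals of `P' ⊗ Q'`. -/
theorem sum_sub_mul_sub_of_tiling {a b : ι → ℝ × ℝ} {A B : ℝ × ℝ}
    (hab : ∀ i, a i ≤ b i) (hAB : A ≤ B) (hU : ⋃ i, Icc (a i) (b i) = Icc A B)
    (hD : Pairwise fun i j => Disjoint (interior (Icc (a i) (b i))) (interior (Icc (a j) (b j))))
    (φ ψ : ℝ → ℝ) :
    ∑ i, (φ (b i).1 - φ (a i).1) * (ψ (b i).2 - ψ (a i).2) =
      (φ B.1 - φ A.1) * (ψ B.2 - ψ A.2) := by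
  classical
  let corners : Finset (ℝ × ℝ) := {A, B} ∪ Finset.univ.image a ∪ Finset.univ.image b
  obtain ⟨P, hP⟩ := exists_polynomial_eqOn (corners.image Prod.fst) φ
  obtain ⟨Q, hQ⟩ := exists_polynomial_eqOn (corners.image Prod.snd) ψ
  have hPc : ∀ c ∈ corners, φ c.1 = P.eval c.1 := fun c hc =>
    (hP _ (Finset.mem_image_of_mem _ hc)).symm
  have hQc : ∀ c ∈ corners, ψ c.2 = Q.eval c.2 := fun c hc =>
    (hQ _ (Finset.mem_image_of_mem _ hc)).symm
  have hA : A ∈ corners := by simp [corners]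
  have hB : B ∈ corners := by simp [corners]
  have ha (i : ι) : a i ∈ corners := by simp [corners]
  have hb (i : ι) : b i ∈ corners := by simp [corners]
  simp only [hPc _ hA, hPc _ hB, hPc _ (ha _), hPc _ (hb _), hQc _ hA, hQc _ hB, hQc _ (ha _),
    hQc _ (hb _), ← setIntegral_Icc_derivative_mul_derivative P Q hAB,
    ← setIntegral_Icc_derivative_mul_derivative P Q (hab _)]
  exact sum_setIntegral_of_tiling hU hD
    (((derivative P).continuous.comp continuous_fst).mul
      ((derivative Q).continuous.comp continuous_snd))

theorem IsRect.exists_eq_Icc {R : Set (ℝ × ℝ)} {w h : ℝ} (hR : IsRect R w h) :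
    ∃ a : ℝ × ℝ, R = Icc a (a + (w, h)) := by
  obtain ⟨-, -, x, y, rfl⟩ := hR
  exact ⟨(x, y), Icc_prod_Icc _ _ _ _⟩

theorem sum_map_mul_map_of_tiling {T : ι → Set (ℝ × ℝ)} {w h : ι → ℝ} {R : Set (ℝ × ℝ)} {W H : ℝ}
    (hT : ∀ i, IsRect (T i) (w i) (h i)) (hR : IsRect R W H) (hU : ⋃ i, T i = R)
    (hD : Pairwise fun i j => Disjoint (interior (T i)) (interior (T j))) (φ ψ : ℝ →+ ℝ) :
    ∑ i, φ (w i) * ψ (h i) = φ W * ψ H := by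
  choose a ha using fun i => (hT i).exists_eq_Icc
  obtain ⟨A, rfl⟩ := hR.exists_eq_Icc
  obtain rfl : T = fun i => Icc (a i) (a i + (w i, h i)) := funext ha
  simpa using sum_sub_mul_sub_of_tiling
    (fun i => le_add_of_nonneg_right ⟨(hT i).1.le, (hT i).2.1.le⟩)
    (le_add_of_nonneg_right ⟨hR.1.le, hR.2.1.le⟩) hU hD φ ψ

/-- Symmetrizing in `φ` and `ψ` makes the orientation of the tiles irrelevant. -/
theorem exists_sum_symm_eq_of_mem_BSet {S : Set ℝ} {z : ℝ} (hz : z ∈ BSet S) :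
    ∃ (m : ℕ) (s t : Fin m → ℝ) (H : ℝ), (∀ i, s i ∈ S) ∧ H ≠ 0 ∧ ∀ φ ψ : ℝ →+ ℝ,
      ∑ i, (φ (s i * t i) * ψ (t i) + ψ (s i * t i) * φ (t i)) =
        φ (z * H) * ψ H + ψ (z * H) * φ H := by
  have ratio_side {w h : ℝ} {A : Set ℝ} (hw : 0 < w) (hh : 0 < h) (hA : w / h ∈ A ∨ h / w ∈ A) :
      ∃ s ∈ A, ∃ t : ℝ, t ≠ 0 ∧ ∀ φ ψ : ℝ →+ ℝ,
        φ (s * t) * ψ t + ψ (s * t) * φ t = φ w * ψ h + ψ w * φ h := by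
    rcases hA with hA | hA
    · exact ⟨_, hA, h, hh.ne', fun φ ψ => by rw [div_mul_cancel₀ _ hh.ne']⟩
    · exact ⟨_, hA, w, hw.ne', fun φ ψ => by rw [div_mul_cancel₀ _ hw.ne']; ring⟩
  obtain ⟨W, H, R, hR, hratio, m, T, w, h, hT, hS, hU, hD⟩ := hz
  choose s hs t _ hst using fun i => ratio_side (hT i).1 (hT i).2.1 (hS i)
  obtain ⟨_, rfl, K, hK, hzK⟩ := ratio_side (A := {z}) hR.1 hR.2.1 (hratio.imp Eq.symm Eq.symm)
  refine ⟨m, s, t, K, hs, hK, fun φ ψ => ?_⟩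
  simp only [hst, hzK, Finset.sum_add_distrib, sum_map_mul_map_of_tiling hT hR hU hD]

end Additivity

theorem pos_of_mem_BSet {S : Set ℝ} {z : ℝ} (hz : z ∈ BSet S) : 0 < z := by
  obtain ⟨W, H, R, ⟨hW, hH, -⟩, rfl | rfl, -⟩ := hz
  · exact div_pos hW hH
  · exact div_pos hH hW

theorem mul_sum_sq_le_sum_mul_sum {ι : Type*} (s : Finset ι) {c : ℝ} (hc : 0 ≤ c) {r f g : ι → ℝ}
    (hf : ∀ i ∈ s, 0 ≤ f i) (hg : ∀ i ∈ s, 0 ≤ g i) (h : ∀ i ∈ s, c * r i ^ 2 ≤ f i * g i) :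
    c * (∑ i ∈ s, r i) ^ 2 ≤ (∑ i ∈ s, f i) * ∑ i ∈ s, g i := by
  have key := Finset.sum_sq_le_sum_mul_sum_of_sq_le_mul s (r := fun i => √c * r i) hf hg
    fun i hi => by rw [mul_pow, Real.sq_sqrt hc]; exact h i hi
  rwa [← Finset.mul_sum, mul_pow, Real.sq_sqrt hc] at key

section Conjugation

variable {K : Type*} [Field K] [Algebra K ℝ]

theorem mem_range_algebraMap_of_mem_BSet {S : Set ℝ} (hS : S ⊆ range (algebraMap K ℝ))
    (hS₀ : ∀ s ∈ S, 0 ≤ s) {z : ℝ} (hz : z ∈ BSet S) : z ∈ range (algebraMap K ℝ) := by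
  by_contra hzK
  obtain ⟨m, s, t, H, hs, hH, hsum⟩ := exists_sum_symm_eq_of_mem_BSet hz
  have hindep : LinearIndependent K ![H, -(z * H)] := by
    rw [LinearIndependent.pair_iff' hH]
    intro k hk
    refine hzK ⟨-k, mul_right_cancel₀ hH ?_⟩
    rw [map_neg, neg_mul, ← Algebra.smul_def, hk, neg_neg]
  obtain ⟨L, hL⟩ := Module.exists_dual_forall_apply_eq_one (hindep.linearIndepOn univ)
  have hLH : L H = 1 := hL 0 (mem_univ _)
  have hLzH : L (z * H) = -1 := by
    rw [← neg_eq_iff_eq_neg, ← map_neg]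
    exact hL 1 (mem_univ _)
  let φ : ℝ →+ ℝ := (algebraMap K ℝ : K →+ ℝ).comp L.toAddMonoidHom
  have hφ (i : Fin m) : φ (s i * t i) = s i * φ (t i) := by
    obtain ⟨k, hk⟩ := hS (hs i)
    simp [φ, ← hk, ← Algebra.smul_def]
  have hneg : ∑ i, (s i * φ (t i) * φ (t i) + s i * φ (t i) * φ (t i)) = -2 := by
    have hφH : φ H = 1 := by simp [φ, hLH]
    have hφzH : φ (z * H) = -1 := by simp [φ, hLzH]
    simp only [← hφ, hsum, hφH, hφzH]
    norm_num
  have hnonneg : 0 ≤ ∑ i, (s i * φ (t i) * φ (t i) + s i * φ (t i) * φ (t i)) :=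
    Finset.sum_nonneg fun i _ => by
      have := mul_nonneg (hS₀ _ (hs i)) (mul_self_nonneg (φ (t i)))
      linarith
  linarith

/-- Apply the two embeddings to a `K`-linear functional that is `1` on a side of the rectangle. -/
theorem exists_sum_embeddings_eq_of_mem_BSet {S : Set K} {k : K}
    (hk : algebraMap K ℝ k ∈ BSet (algebraMap K ℝ '' S)) :
    ∃ (m : ℕ) (s l : Fin m → K), (∀ i, s i ∈ S) ∧ ∀ σ τ : K →+* ℝ,
      ∑ i, (σ (s i) + τ (s i)) * (σ (l i) * τ (l i)) = σ k + τ k := by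
  obtain ⟨m, s', t, H, hs', hH, hsum⟩ := exists_sum_symm_eq_of_mem_BSet hk
  choose s hs hss' using hs'
  obtain ⟨L, hL⟩ := Module.Projective.exists_dual_eq_one K hH
  refine ⟨m, s, fun i => L (t i), hs, fun σ τ => ?_⟩
  have key := hsum ((σ : K →+ ℝ).comp L.toAddMonoidHom) ((τ : K →+ ℝ).comp L.toAddMonoidHom)
  simp only [← hss', ← Algebra.smul_def, AddMonoidHom.comp_apply, LinearMap.toAddMonoidHom_coe,
    map_smul, smul_eq_mul, AddMonoidHom.coe_coe, map_mul, hL, map_one, mul_one] at key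
  rw [← key]
  exact Finset.sum_congr rfl fun i _ => by ring

theorem embedding_nonneg_of_mem_BSet (σ : K →+* ℝ) {S : Set K} (hσ : ∀ s ∈ S, 0 ≤ σ s) {k : K}
    (hk : algebraMap K ℝ k ∈ BSet (algebraMap K ℝ '' S)) : 0 ≤ σ k := by
  obtain ⟨m, s, l, hs, hsum⟩ := exists_sum_embeddings_eq_of_mem_BSet hk
  have hnonneg : 0 ≤ ∑ i, (σ (s i) + σ (s i)) * (σ (l i) * σ (l i)) :=
    Finset.sum_nonneg fun i _ =>
      mul_nonneg (add_nonneg (hσ _ (hs i)) (hσ _ (hs i))) (mul_self_nonneg _)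
  linarith [hsum σ σ]

/-- For a quadratic field this says that the least value of norm / trace² over the tiles is a lower
bound for the norm / trace² of the tiled rectangle; it is the Cauchy–Schwarz inequality for the sums
`∑ s l²`, `∑ σ(s) σ(l)²` and `∑ (s + σ(s)) l σ(l)`. -/
theorem exists_norm_mul_trace_sq_le_of_mem_BSet (σ : K →+* ℝ) {S : Set K}
    (hS : ∀ s ∈ S, 0 < algebraMap K ℝ s) (hσ : ∀ s ∈ S, 0 < σ s) {k : K}
    (hk : algebraMap K ℝ k ∈ BSet (algebraMap K ℝ '' S)) :
    ∃ s ∈ S, algebraMap K ℝ s * σ s * (algebraMap K ℝ k + σ k) ^ 2 ≤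
      algebraMap K ℝ k * σ k * (algebraMap K ℝ s + σ s) ^ 2 := by
  obtain ⟨m, s, l, hs, hsum⟩ := exists_sum_embeddings_eq_of_mem_BSet hk
  set ρ := algebraMap K ℝ
  have hm : Nonempty (Fin m) := by
    by_contra hm
    rw [not_nonempty_iff] at hm
    have hρ := hsum ρ ρ
    rw [Finset.univ_eq_empty, Finset.sum_empty] at hρ
    linarith [pos_of_mem_BSet hk]
  have htrace (i : Fin m) : 0 < ρ (s i) + σ (s i) := add_pos (hS _ (hs i)) (hσ _ (hs i))
  obtain ⟨j, hj⟩ := Finite.exists_min fun i => ρ (s i) * σ (s i) / (ρ (s i) + σ (s i)) ^ 2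
  refine ⟨s j, hs j, ?_⟩
  set c := ρ (s j) * σ (s j) / (ρ (s j) + σ (s j)) ^ 2 with hc
  have hc₀ : 0 ≤ 4 * c := by have := hS _ (hs j); have := hσ _ (hs j); positivity
  have cauchy := mul_sum_sq_le_sum_mul_sum Finset.univ hc₀
    (r := fun i => (ρ (s i) + σ (s i)) * (ρ (l i) * σ (l i)))
    (f := fun i => (ρ (s i) + ρ (s i)) * (ρ (l i) * ρ (l i)))
    (g := fun i => (σ (s i) + σ (s i)) * (σ (l i) * σ (l i)))
    (fun i _ => mul_nonneg (add_pos (hS _ (hs i)) (hS _ (hs i))).le (mul_self_nonneg _))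
    (fun i _ => mul_nonneg (add_pos (hσ _ (hs i)) (hσ _ (hs i))).le (mul_self_nonneg _))
    (fun i _ => by
      have hmin : c * (ρ (s i) + σ (s i)) ^ 2 ≤ ρ (s i) * σ (s i) :=
        (le_div_iff₀ (pow_pos (htrace i) 2)).1 (hj i)
      linear_combination 4 * (ρ (l i) * σ (l i)) ^ 2 * hmin)
  rw [hsum, hsum, hsum] at cauchy
  have hk' : c * (ρ k + σ k) ^ 2 ≤ ρ k * σ k := by linarith
  rwa [hc, div_mul_eq_mul_div, div_le_iff₀ (pow_pos (htrace j) 2)] at hk'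

end Conjugation

section Quadratic

variable {p : ℚ} {r : ℝ}

/-- The embedding of `ℚ[X]/(X² - p)` in `ℝ` attached to a real square root `r` of `p`. Replacing `r`
by `-r` gives the conjugate embedding. -/
noncomputable def quadraticEmbedding (hr : r ^ 2 = p) : QuadraticAlgebra ℚ p 0 →ₐ[ℚ] ℝ :=
  QuadraticAlgebra.lift ⟨r, by simp [← sq, hr, Rat.smul_def]⟩

theorem quadraticEmbedding_apply (hr : r ^ 2 = p) (k : QuadraticAlgebra ℚ p 0) :
    quadraticEmbedding hr k = k.re + k.im * r := by
  simp [quadraticEmbedding, Rat.smul_def]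

theorem sq_ne_of_irrational (hr : r ^ 2 = p) (hirr : Irrational r) (q : ℚ) : q ^ 2 ≠ p := by
  rintro rfl
  rcases sq_eq_sq_iff_eq_or_eq_neg.1 (hr.trans (Rat.cast_pow q 2)) with h | h
  · exact hirr.ne_rat q h
  · exact hirr.ne_rat (-q) (by rw [h, Rat.cast_neg])

theorem exists_norm_mul_sq_le_of_mem_BSet (hr : r ^ 2 = p) (hirr : Irrational r) {ι : Type*}
    {a b : ι → ℚ} (hpos : ∀ i, 0 < (a i : ℝ) + b i * r) (hconj : ∀ i, 0 < (a i : ℝ) - b i * r)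
    {z : ℝ} (hz : z ∈ BSet (range fun i => (a i : ℝ) + b i * r)) :
    ∃ e f : ℚ, z = e + f * r ∧ 0 ≤ (e : ℝ) - f * r ∧
      ∃ i, (a i ^ 2 - p * b i ^ 2) * e ^ 2 ≤ (e ^ 2 - p * f ^ 2) * a i ^ 2 := by
  have : Fact (∀ q : ℚ, q ^ 2 ≠ p + 0 * q) :=
    ⟨fun q => by simpa using sq_ne_of_irrational hr hirr q⟩
  let : Algebra (QuadraticAlgebra ℚ p 0) ℝ := (quadraticEmbedding hr).toRingHom.toAlgebra
  have hρ (k : QuadraticAlgebra ℚ p 0) : algebraMap _ ℝ k = k.re + k.im * r :=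
    quadraticEmbedding_apply hr k
  have hr' : (-r) ^ 2 = p := by rw [neg_sq, hr]
  let σ : QuadraticAlgebra ℚ p 0 →+* ℝ := quadraticEmbedding hr'
  have hσ (k : QuadraticAlgebra ℚ p 0) : σ k = k.re - k.im * r :=
    (quadraticEmbedding_apply hr' k).trans (by ring)
  let κ (i : ι) : QuadraticAlgebra ℚ p 0 := ⟨a i, b i⟩
  have hrange : (range fun i => (a i : ℝ) + b i * r) = algebraMap _ ℝ '' range κ := by
    rw [← range_comp]
    exact congrArg range (funext fun i => (hρ (κ i)).symm)
  have hκpos : ∀ k ∈ range κ, 0 < algebraMap _ ℝ k :=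
    forall_mem_range.2 fun i => by simpa only [hρ] using hpos i
  have hκconj : ∀ k ∈ range κ, 0 < σ k :=
    forall_mem_range.2 fun i => by simpa only [hσ] using hconj i
  rw [hrange] at hz
  obtain ⟨k, rfl⟩ := mem_range_algebraMap_of_mem_BSet (image_subset_range _ _)
    (forall_mem_image.2 fun k hk => (hκpos k hk).le) hz
  have hk := embedding_nonneg_of_mem_BSet σ (fun s hs => (hκconj s hs).le) hz
  obtain ⟨_, ⟨i, rfl⟩, hi⟩ := exists_norm_mul_trace_sq_le_of_mem_BSet σ hκpos hκconj hz
  refine ⟨k.re, k.im, hρ k, (hσ k).symm ▸ hk, i, ?_⟩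
  rw [← Rat.cast_le (K := ℝ)]
  push_cast
  simp only [hρ, hσ, κ] at hi
  linear_combination hi / 4 + (b i ^ 2 * k.re ^ 2 - k.im ^ 2 * a i ^ 2) * hr

theorem exists_eq_add_mul_of_mem_BSet (hr : r ^ 2 = p) (hirr : Irrational r) {ι : Type*}
    {a b : ι → ℚ} (hpos : ∀ i, 0 < (a i : ℝ) + b i * r) (hconj : ∀ i, 0 < (a i : ℝ) - b i * r)
    {z : ℝ} (hz : z ∈ BSet (range fun i => (a i : ℝ) + b i * r)) :
    ∃ e f : ℚ, z = e + f * r ∧ 0 < e ∧ ∃ i, |f| / e ≤ |b i| / a i := by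
  have hz₀ := pos_of_mem_BSet hz
  obtain ⟨e, f, rfl, hef, i, hi⟩ := exists_norm_mul_sq_le_of_mem_BSet hr hirr hpos hconj hz
  have ha : 0 < a i := by
    rw [← Rat.cast_pos (K := ℝ)]
    linarith [hpos i, hconj i]
  have he : 0 < e := by
    rw [← Rat.cast_pos (K := ℝ)]
    linarith
  have hp : 0 < p := by
    rw [← Rat.cast_pos (K := ℝ), ← hr]
    exact sq_pos_of_ne_zero hirr.ne_zero
  refine ⟨e, f, rfl, he, i, ?_⟩
  rw [div_le_div_iff₀ he ha, ← abs_of_pos ha, ← abs_of_pos he, ← abs_mul, ← abs_mul, ← sq_le_sq]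
  refine le_of_mul_le_mul_left ?_ hp
  linarith

end Quadratic

section Construction

theorem tiledBy_iUnion {ι : Type*} [Finite ι] {S : Set ℝ} {T : ι → Set (ℝ × ℝ)} {w h : ι → ℝ}
    (hT : ∀ i, IsRect (T i) (w i) (h i)) (hS : ∀ i, w i / h i ∈ S ∨ h i / w i ∈ S)
    (hD : Pairwise fun i j => Disjoint (interior (T i)) (interior (T j))) :
    TiledBy (⋃ i, T i) S :=
  let e := (Finite.equivFin ι).symm
  ⟨_, T ∘ e, w ∘ e, h ∘ e, fun i => hT (e i), fun i => hS (e i), e.surjective.iUnion_comp T,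
    hD.comp_of_injective e.injective⟩

theorem IsRect.tiledBy {S : Set ℝ} {R : Set (ℝ × ℝ)} {w h : ℝ} (hR : IsRect R w h)
    (hS : w / h ∈ S ∨ h / w ∈ S) : TiledBy R S :=
  iUnion_const (ι := Unit) R ▸
    tiledBy_iUnion (fun _ => hR) (fun _ => hS) (Subsingleton.pairwise (α := Unit))

theorem TiledBy.union {S : Set ℝ} {R₁ R₂ : Set (ℝ × ℝ)} (h₁ : TiledBy R₁ S) (h₂ : TiledBy R₂ S)
    (hR : Disjoint (interior R₁) (interior R₂)) : TiledBy (R₁ ∪ R₂) S := by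
  obtain ⟨m₁, T₁, w₁, k₁, hT₁, hS₁, rfl, hD₁⟩ := h₁
  obtain ⟨m₂, T₂, w₂, k₂, hT₂, hS₂, rfl, hD₂⟩ := h₂
  have disjoint_tiles (i : Fin m₁) (j : Fin m₂) : Disjoint (interior (T₁ i)) (interior (T₂ j)) :=
    hR.mono (interior_mono (subset_iUnion T₁ i)) (interior_mono (subset_iUnion T₂ j))
  have hU : ⋃ i, Sum.elim T₁ T₂ i = (⋃ i, T₁ i) ∪ ⋃ i, T₂ i := iUnion_sum
  rw [← hU]
  refine tiledBy_iUnion (w := Sum.elim w₁ w₂) (h := Sum.elim k₁ k₂)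
    (Sum.forall.2 ⟨hT₁, hT₂⟩) (Sum.forall.2 ⟨hS₁, hS₂⟩) ?_
  rintro (i | i) (j | j) hij
  · exact hD₁ (ne_of_apply_ne _ hij)
  · exact disjoint_tiles i j
  · exact (disjoint_tiles j i).symm
  · exact hD₂ (ne_of_apply_ne _ hij)

theorem IsRect.exists_union_of_width_add {R : Set (ℝ × ℝ)} {w₁ w₂ h : ℝ}
    (hR : IsRect R (w₁ + w₂) h) (hw₁ : 0 < w₁) (hw₂ : 0 < w₂) :
    ∃ R₁ R₂, IsRect R₁ w₁ h ∧ IsRect R₂ w₂ h ∧ R = R₁ ∪ R₂ ∧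
      Disjoint (interior R₁) (interior R₂) := by
  obtain ⟨-, hh, x, y, rfl⟩ := hR
  refine ⟨_, _, ⟨hw₁, hh, x, y, rfl⟩, ⟨hw₂, hh, x + w₁, y, rfl⟩, ?_, ?_⟩
  · rw [← union_prod, Icc_union_Icc_eq_Icc (by linarith) (by linarith), add_assoc]
  · simp only [interior_prod_eq, interior_Icc]
    exact (Ioo_disjoint_Ioo.2 (by simp)).set_prod_left _ _

theorem IsRect.exists_union_of_height_add {R : Set (ℝ × ℝ)} {w h₁ h₂ : ℝ}
    (hR : IsRect R w (h₁ + h₂)) (hh₁ : 0 < h₁) (hh₂ : 0 < h₂) :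
    ∃ R₁ R₂, IsRect R₁ w h₁ ∧ IsRect R₂ w h₂ ∧ R = R₁ ∪ R₂ ∧
      Disjoint (interior R₁) (interior R₂) := by
  obtain ⟨hw, -, x, y, rfl⟩ := hR
  refine ⟨_, _, ⟨hw, hh₁, x, y, rfl⟩, ⟨hw, hh₂, x, y + h₁, rfl⟩, ?_, ?_⟩
  · rw [← prod_union, Icc_union_Icc_eq_Icc (by linarith) (by linarith), add_assoc]
  · simp only [interior_prod_eq, interior_Icc]
    exact (Ioo_disjoint_Ioo.2 (by simp)).set_prod_right _ _

/-- The nonnegative ratios `z` such that every rectangle with side ratio `z`, of either orientation,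
can be tiled with ratios in `S`. There is no rectangle of ratio `0`, so `0` belongs vacuously. -/
def tileableRatios (S : Set ℝ) : AddSubmonoid ℝ where
  carrier := {z | 0 ≤ z ∧ ∀ R w h, IsRect R w h → w = z * h ∨ h = z * w → TiledBy R S}
  zero_mem' := by
    refine ⟨le_rfl, ?_⟩
    rintro R w h ⟨hw, hh, -⟩ (h₀ | h₀)
    · exact absurd h₀ (by simpa using hw.ne')
    · exact absurd h₀ (by simpa using hh.ne')
  add_mem' := by
    rintro y z ⟨hy₀, hy⟩ ⟨hz₀, hz⟩
    refine ⟨add_nonneg hy₀ hz₀, ?_⟩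
    rcases hy₀.eq_or_lt with rfl | hy₀
    · simpa using hz
    rcases hz₀.eq_or_lt with rfl | hz₀
    · simpa using hy
    rintro R w h hR (rfl | rfl)
    · rw [add_mul] at hR
      obtain ⟨R₁, R₂, hR₁, hR₂, rfl, hdisj⟩ :=
        hR.exists_union_of_width_add (mul_pos hy₀ hR.2.1) (mul_pos hz₀ hR.2.1)
      exact (hy R₁ _ h hR₁ (.inl rfl)).union (hz R₂ _ h hR₂ (.inl rfl)) hdisj
    · rw [add_mul] at hR
      obtain ⟨R₁, R₂, hR₁, hR₂, rfl, hdisj⟩ :=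
        hR.exists_union_of_height_add (mul_pos hy₀ hR.1) (mul_pos hz₀ hR.1)
      exact (hy R₁ w _ hR₁ (.inr rfl)).union (hz R₂ w _ hR₂ (.inr rfl)) hdisj

variable {S : Set ℝ} {z : ℝ}

theorem mem_tileableRatios_of_mem (hz₀ : 0 ≤ z) (hz : z ∈ S) : z ∈ tileableRatios S := by
  refine ⟨hz₀, ?_⟩
  rintro R w h hR (rfl | rfl)
  · exact hR.tiledBy (.inl (by rwa [mul_div_cancel_right₀ _ hR.2.1.ne']))
  · exact hR.tiledBy (.inr (by rwa [mul_div_cancel_right₀ _ hR.1.ne']))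

theorem mem_BSet_of_mem_tileableRatios (hz₀ : 0 < z) (hz : z ∈ tileableRatios S) :
    z ∈ BSet S := by
  have hR : IsRect (Icc 0 (0 + z) ×ˢ Icc 0 (0 + 1)) z 1 := ⟨hz₀, one_pos, 0, 0, rfl⟩
  exact ⟨z, 1, _, hR, .inl (div_one z).symm, hz.2 _ z 1 hR (.inl (mul_one z).symm)⟩

theorem inv_mem_tileableRatios (hz : z ∈ tileableRatios S) : z⁻¹ ∈ tileableRatios S := by
  rcases hz.1.eq_or_lt with rfl | hz₀
  · simp
  refine ⟨inv_nonneg.2 hz.1, fun R w h hR hratio => hz.2 R w h hR ?_⟩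
  simpa only [eq_inv_mul_iff_mul_eq₀ hz₀.ne', eq_comm, or_comm] using hratio

theorem ratCast_mul_mem_tileableRatios (hz : z ∈ tileableRatios S) {q : ℚ} (hq : 0 ≤ q) :
    q * z ∈ tileableRatios S := by
  lift q to ℚ≥0 using hq
  have hdiv : (q.den • z⁻¹)⁻¹ ∈ tileableRatios S :=
    inv_mem_tileableRatios (nsmul_mem (inv_mem_tileableRatios hz) _)
  convert nsmul_mem hdiv q.num using 1
  rw [nsmul_eq_mul, nsmul_eq_mul, mul_inv, inv_inv, ← mul_assoc, ← div_eq_mul_inv]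
  congr 1
  exact_mod_cast (NNRat.cast_def (K := ℝ) q)

theorem conj_mem_tileableRatios {p : ℚ} {r : ℝ} (hr : r ^ 2 = p) {a b : ℚ}
    (hpos : 0 < (a : ℝ) + b * r) (hconj : 0 ≤ (a : ℝ) - b * r)
    (h : (a : ℝ) + b * r ∈ tileableRatios S) : (a : ℝ) - b * r ∈ tileableRatios S := by
  have hnorm : ((a ^ 2 - p * b ^ 2 : ℚ) : ℝ) = (a - b * r) * (a + b * r) := by
    push_cast
    rw [← hr]
    ring
  have hnorm₀ : 0 ≤ a ^ 2 - p * b ^ 2 := by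
    have := mul_nonneg hconj hpos.le
    rw [← hnorm] at this
    exact_mod_cast this
  have := ratCast_mul_mem_tileableRatios (inv_mem_tileableRatios h) hnorm₀
  rwa [hnorm, mul_inv_cancel_right₀ hpos.ne'] at this

theorem exists_nonneg_combination {a b e f : ℚ} (ha : 0 < a) (he : 0 < e)
    (h : |f| / e ≤ |b| / a) :
    ∃ s t : ℚ, 0 ≤ s ∧ 0 ≤ t ∧ e = (s + t) * a ∧ f = (s - t) * b := by
  have hf : f / b * b = f := div_mul_cancel_of_imp fun hb => by
    rw [hb, abs_zero, zero_div] at h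
    exact abs_nonpos_iff.1 ((div_le_iff₀ he).1 h |>.trans_eq (zero_mul e))
  have hslope : |f / b| ≤ e / a := by
    rw [abs_div]
    refine div_le_of_le_mul₀ (abs_nonneg b) (div_nonneg he.le ha.le) ?_
    rw [div_mul_eq_mul_div, mul_div_assoc, mul_comm]
    exact (div_le_iff₀ he).1 h
  obtain ⟨hl, hu⟩ := abs_le.1 hslope
  refine ⟨(e / a + f / b) / 2, (e / a - f / b) / 2, by linarith, by linarith, ?_, ?_⟩
  · rw [← add_div, add_add_sub_cancel, add_self_div_two, div_mul_cancel₀ _ ha.ne']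
  · linear_combination -hf

theorem add_mul_mem_BSet {p : ℚ} {r : ℝ} (hr : r ^ 2 = p) {a b e f : ℚ}
    (hpos : 0 < (a : ℝ) + b * r) (hconj : 0 < (a : ℝ) - b * r) (hS : (a : ℝ) + b * r ∈ S)
    (he : 0 < e) (h : |f| / e ≤ |b| / a) : (e : ℝ) + f * r ∈ BSet S := by
  have ha : 0 < a := by
    have : (0 : ℝ) < a := by linarith
    exact_mod_cast this
  obtain ⟨s, t, hs, ht, rfl, rfl⟩ := exists_nonneg_combination ha he h
  have hmem := mem_tileableRatios_of_mem hpos.le hS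
  have hmem' := conj_mem_tileableRatios hr hpos hconj.le hmem
  have hcomb : (((s + t) * a : ℚ) : ℝ) + ((s - t) * b : ℚ) * r =
      s * (a + b * r) + t * (a - b * r) := by
    push_cast
    ring
  rw [hcomb]
  refine mem_BSet_of_mem_tileableRatios ?_ (add_mem (ratCast_mul_mem_tileableRatios hmem hs)
    (ratCast_mul_mem_tileableRatios hmem' ht))
  rcases hs.eq_or_lt with rfl | hs
  · have ht : 0 < t := by simpa using pos_of_mul_pos_left he ha.le
    simpa using mul_pos (Rat.cast_pos.2 ht) hconj
  · exact add_pos_of_pos_of_nonneg (mul_pos (Rat.cast_pos.2 hs) hpos)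
      (mul_nonneg (Rat.cast_nonneg.2 ht) hconj.le)

end Construction

theorem stmt_1_general {p : ℚ} (hirr : Irrational (Real.sqrt p)) {ι : Type*} (a b : ι → ℚ)
    (x : ι → ℝ) (hx : ∀ i, x i = (a i : ℝ) + (b i : ℝ) * Real.sqrt p) (hxpos : ∀ i, 0 < x i)
    (hconj : ∀ i, 0 < (a i : ℝ) - (b i : ℝ) * Real.sqrt p) (z : ℝ) :
    z ∈ BSet (Set.range x) ↔ ∃ e f : ℚ,
      z = (e : ℝ) + (f : ℝ) * Real.sqrt p ∧ 0 < e ∧ ∃ i, |f| / e ≤ |b i| / a i := by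
  have hsqrt : √(p : ℝ) ^ 2 = p := Real.sq_sqrt (Real.sqrt_ne_zero'.1 hirr.ne_zero).le
  obtain rfl : x = fun i => (a i : ℝ) + b i * √p := funext hx
  refine ⟨exists_eq_add_mul_of_mem_BSet hsqrt hirr hxpos hconj, ?_⟩
  rintro ⟨e, f, rfl, he, i, hi⟩
  exact add_mul_mem_BSet hsqrt (hxpos i) (hconj i) (mem_range_self i) he hi

/-- Theorem 1(2): if all conjugates are positive, then `B(x₁, …, xₙ)` is the set
`M(x₁, …, xₙ)` of numbers `e + f√p` with `e > 0` and `|f|/e ≤ max |bᵢ|/aᵢ`. -/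
theorem stmt_1 (p : ℚ) (hp : 0 < p) (hirr : Irrational (Real.sqrt p))
    (n : ℕ) (hn : 0 < n) (a b : Fin n → ℚ) (x : Fin n → ℝ)
    (hx : ∀ i, x i = (a i : ℝ) + (b i : ℝ) * Real.sqrt p)
    (hxpos : ∀ i, 0 < x i)
    (hconj : ∀ i, 0 < (a i : ℝ) - (b i : ℝ) * Real.sqrt p)
    (z : ℝ) (hz : 0 < z) :
    z ∈ BSet (Set.range x) ↔
      ∃ e f : ℚ, z = (e : ℝ) + (f : ℝ) * Real.sqrt p ∧ 0 < e ∧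
        |f| / e ≤ Finset.univ.sup' (Finset.univ_nonempty_iff.mpr
          (Fin.pos_iff_nonempty.mp hn)) (fun i => |b i| / a i) := by
  simpa [Finset.le_sup'_iff] using stmt_1_general hirr a b x hx hxpos hconj z
end

section
/- Let x₁, …, xₙ be positive real numbers. If a ∈ B(x₁, …, xₙ) and q is a positive rational number, then q·a ∈ B(x₁, …, xₙ). -/
/-!
Write `q = p / k` with positive integers `p` and `k`. Stacking translates of a tiled `W × H`
rectangle in a `p × k` grid tiles a rectangle with sides `p * W` and `k * H`, whose ratio is
`q * (W / H)`. If the ratio is read as `H / W`, a `k × p` grid does the same.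
-/

open Set
open scoped Pointwise

theorem iUnion_Icc_map_succ {α : Type*} [LinearOrder α] {f : ℕ → α} (hf : Monotone f) {n : ℕ}
    (hn : n ≠ 0) : ⋃ i : Fin n, Icc (f i) (f (i + 1)) = Icc (f 0) (f n) := by
  induction n with
  | zero => contradiction
  | succ n ih =>
    obtain rfl | hn₀ := eq_or_ne n 0
    · simp [iUnion_const]
    · calc ⋃ i : Fin (n + 1), Icc (f i) (f (i + 1))
          = (⋃ i : Fin n, Icc (f i) (f (i + 1))) ∪ Icc (f n) (f (n + 1)) :=
            iUnion_fin_add_one_eq_iUnion_castSucc _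
        _ = Icc (f 0) (f n) ∪ Icc (f n) (f (n + 1)) := by rw [ih hn₀]
        _ = Icc (f 0) (f (n + 1)) := Icc_union_Icc_eq_Icc (hf n.zero_le) (hf n.le_succ)

theorem vadd_prod {α β : Type*} [Add α] [Add β] (a : α) (b : β) (s : Set α) (t : Set β) :
    (a, b) +ᵥ s ×ˢ t = (a +ᵥ s) ×ˢ (b +ᵥ t) :=
  prodMap_image_prod (a + ·) (b + ·) s t

theorem IsRect.vadd {R : Set (ℝ × ℝ)} {w h : ℝ} (hR : IsRect R w h) (c : ℝ × ℝ) :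
    IsRect (c +ᵥ R) w h := by
  obtain ⟨hw, hh, x, y, rfl⟩ := hR
  refine ⟨hw, hh, c.1 + x, c.2 + y, ?_⟩
  rw [vadd_prod, vadd_Icc, vadd_Icc, add_assoc, add_assoc]

namespace TiledBy

variable {ratios : Set ℝ}

theorem vadd {R : Set (ℝ × ℝ)} (hR : TiledBy R ratios) (c : ℝ × ℝ) :
    TiledBy (c +ᵥ R) ratios := by
  obtain ⟨m, T, w, h, hrect, hratio, rfl, hdisj⟩ := hR
  refine ⟨m, fun i => c +ᵥ T i, w, h, fun i => (hrect i).vadd c, hratio,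
    (vadd_set_iUnion c T).symm, fun i j hij => ?_⟩
  simpa only [interior_vadd, disjoint_vadd_set] using hdisj hij

theorem of_finite {κ : Type*} [Finite κ] {T : κ → Set (ℝ × ℝ)} {w h : κ → ℝ}
    (hrect : ∀ k, IsRect (T k) (w k) (h k))
    (hratio : ∀ k, w k / h k ∈ ratios ∨ h k / w k ∈ ratios)
    (hdisj : Pairwise fun k l => Disjoint (interior (T k)) (interior (T l))) :
    TiledBy (⋃ k, T k) ratios := by
  obtain ⟨m, ⟨e⟩⟩ := Finite.exists_equiv_fin κ
  exact ⟨m, T ∘ e.symm, w ∘ e.symm, h ∘ e.symm, fun i => hrect (e.symm i),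
    fun i => hratio (e.symm i), e.symm.surjective.iUnion_comp T,
    hdisj.comp_of_injective e.symm.injective⟩

theorem iUnion {ι : Type*} [Finite ι] {S : ι → Set (ℝ × ℝ)} (hS : ∀ i, TiledBy (S i) ratios)
    (hdisj : Pairwise fun i j => Disjoint (interior (S i)) (interior (S j))) :
    TiledBy (⋃ i, S i) ratios := by
  choose m T w h hrect hratio hcover hdisjT using hS
  have hunion : ⋃ i, S i = ⋃ k : Σ i, Fin (m i), T k.1 k.2 := by
    simp only [iUnion_sigma, hcover]
  have hsub (i : ι) (u : Fin (m i)) : T i u ⊆ S i := hcover i ▸ subset_iUnion (T i) u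
  rw [hunion]
  refine of_finite (fun k => hrect k.1 k.2) (fun k => hratio k.1 k.2) ?_
  rintro ⟨i, u⟩ ⟨j, v⟩ hne
  obtain rfl | hij := eq_or_ne i j
  · exact hdisjT i fun huv => hne (congrArg (Sigma.mk i) huv)
  · exact (hdisj hij).mono (interior_mono (hsub i u)) (interior_mono (hsub j v))

theorem grid {f g : ℕ → ℝ} (hf : Monotone f) (hg : Monotone g) {p k : ℕ} (hp : p ≠ 0)
    (hk : k ≠ 0)
    (hcell : ∀ i < p, ∀ j < k, TiledBy (Icc (f i) (f (i + 1)) ×ˢ Icc (g j) (g (j + 1))) ratios) :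
    TiledBy (Icc (f 0) (f p) ×ˢ Icc (g 0) (g k)) ratios := by
  rw [← iUnion_Icc_map_succ hf hp, ← iUnion_Icc_map_succ hg hk, ← iUnion_prod]
  refine iUnion (fun s => hcell s.1 s.1.2 s.2 s.2.2) ?_
  rintro ⟨i, j⟩ ⟨i', j'⟩ hne
  simp only [interior_prod_eq, interior_Icc, disjoint_prod]
  obtain hi | hj : i ≠ i' ∨ j ≠ j' := by
    rwa [← not_and_or, ← Prod.mk.injEq]
  · exact .inl (hf.pairwise_disjoint_on_Ioo_succ (Fin.val_ne_of_ne hi))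
  · exact .inr (hg.pairwise_disjoint_on_Ioo_succ (Fin.val_ne_of_ne hj))

theorem exists_isRect_nat_mul {R : Set (ℝ × ℝ)} {W H : ℝ} (hT : TiledBy R ratios)
    (hR : IsRect R W H) {p k : ℕ} (hp : p ≠ 0) (hk : k ≠ 0) :
    ∃ R', IsRect R' (p * W) (k * H) ∧ TiledBy R' ratios := by
  obtain ⟨hW, hH, x, y, rfl⟩ := hR
  have monotone_add_mul (z : ℝ) {L : ℝ} (hL : 0 < L) : Monotone fun i : ℕ => z + i * L :=
    (Nat.mono_cast.mul_const hL.le).const_add z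
  have vadd_Icc_eq_cell (z L : ℝ) (i : ℕ) :
      (i * L : ℝ) +ᵥ Icc z (z + L) = Icc (z + i * L) (z + (i + 1 : ℕ) * L) := by
    rw [vadd_Icc]
    push_cast
    ring_nf
  refine ⟨Icc x (x + p * W) ×ˢ Icc y (y + k * H), ⟨by positivity, by positivity, x, y, rfl⟩, ?_⟩
  have hgrid := grid (monotone_add_mul x hW) (monotone_add_mul y hH) hp hk fun i _ j _ => by
    rw [← vadd_Icc_eq_cell, ← vadd_Icc_eq_cell, ← vadd_prod]
    exact hT.vadd (i * W, j * H)
  simpa only [Nat.cast_zero, zero_mul, add_zero] using hgrid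

end TiledBy

theorem stmt_5_general {ratios : Set ℝ} {a : ℝ} (ha : a ∈ BSet ratios) (q : ℚ) (hq : 0 < q) :
    (q : ℝ) * a ∈ BSet ratios := by
  obtain ⟨W, H, R, hR, hratio, hT⟩ := ha
  lift q to ℚ≥0 using hq.le
  have hnum : q.num ≠ 0 := NNRat.num_ne_zero.mpr (by exact_mod_cast hq.ne')
  rw [Rat.cast_nnratCast, NNRat.cast_def]
  obtain rfl | rfl := hratio
  · obtain ⟨R', hR', hT'⟩ := hT.exists_isRect_nat_mul hR hnum q.den_ne_zero
    exact ⟨_, _, R', hR', .inl (mul_div_mul_comm ..).symm, hT'⟩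
  · obtain ⟨R', hR', hT'⟩ := hT.exists_isRect_nat_mul hR q.den_ne_zero hnum
    exact ⟨_, _, R', hR', .inr (mul_div_mul_comm ..).symm, hT'⟩

/-- Lemma 3: `B(x₁, …, xₙ)` is closed under multiplication by positive rationals. -/
theorem stmt_5 (n : ℕ) (x : Fin n → ℝ) (hxpos : ∀ i, 0 < x i)
    (a : ℝ) (ha : a ∈ BSet (Set.range x)) (q : ℚ) (hq : 0 < q) :
    (q : ℝ) * a ∈ BSet (Set.range x) :=
  stmt_5_general ha q hq
end

section
/- Let p be a positive rational number with √p irrational, let a, b be rational numbers, and set x = a + b√p. If x > 0 and a − b√p > 0, then a − b√p ∈ B(x). -/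
/-!
The product of `x = a + b√p` with its conjugate is the rational norm `a² - b²p`. Write this norm as
`m / n` with `m`, `n` positive integers: the conjugate is then `m / (n * x)`, the side ratio of an
`m × n` grid of `1 × x` rectangles.
-/

theorem biUnion_Ico_Icc_map_succ {ι α : Type*} [LinearOrder ι] [SuccOrder ι] [IsSuccArchimedean ι]
    [LinearOrder α] {f : ι → α} (hf : Monotone f) {m n : ι} (hmn : m < n) :
    ⋃ i ∈ Set.Ico m n, Set.Icc (f i) (f (Order.succ i)) = Set.Icc (f m) (f n) := by
  apply Set.Subset.antisymm
  · exact Set.iUnion₂_subset fun i hi ↦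
      Set.Icc_subset_Icc (hf hi.1) (hf (Order.succ_le_of_lt hi.2))
  · rw [← Set.Ioc_insert_left (hf hmn.le), ← hf.biUnion_Ico_Ioc_map_succ m n, Set.insert_subset_iff]
    exact ⟨Set.mem_biUnion (Set.left_mem_Ico.2 hmn) (Set.left_mem_Icc.2 (hf (Order.le_succ m))),
      Set.iUnion₂_mono fun _ _ ↦ Set.Ioc_subset_Icc_self⟩

theorem pairwise_disjoint_interior_Icc_map_succ {ι α : Type*} [LinearOrder ι] [SuccOrder ι]
    [LinearOrder α] [TopologicalSpace α] [OrderTopology α] [DenselyOrdered α] [NoMinOrder α]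
    [NoMaxOrder α] {f : ι → α} (hf : Monotone f) :
    Pairwise fun i j ↦ Disjoint (interior (Set.Icc (f i) (f (Order.succ i))))
      (interior (Set.Icc (f j) (f (Order.succ j)))) := by
  simpa only [interior_Icc] using! hf.pairwise_disjoint_on_Ioo_succ

theorem pairwise_disjoint_interior_prod {X Y ι κ : Type*} [TopologicalSpace X] [TopologicalSpace Y]
    {S : ι → Set X} {T : κ → Set Y}
    (hS : Pairwise fun i j ↦ Disjoint (interior (S i)) (interior (S j)))
    (hT : Pairwise fun i j ↦ Disjoint (interior (T i)) (interior (T j))) :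
    Pairwise fun k l : ι × κ ↦
      Disjoint (interior (S k.1 ×ˢ T k.2)) (interior (S l.1 ×ˢ T l.2)) := by
  intro k l hkl
  rw [interior_prod_eq, interior_prod_eq, Set.disjoint_prod]
  exact (not_and_or.1 (mt Prod.ext_iff.2 hkl)).imp (fun h ↦ hS h) (fun h ↦ hT h)

theorem isRect_Icc_prod_Icc {a b c d : ℝ} (hab : a < b) (hcd : c < d) :
    IsRect (Set.Icc a b ×ˢ Set.Icc c d) (b - a) (d - c) :=
  ⟨sub_pos.2 hab, sub_pos.2 hcd, a, c, by simp only [add_sub_cancel]⟩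

theorem tiledBy_of_finite {ι : Type*} [Finite ι] {R : Set (ℝ × ℝ)} {ratios : Set ℝ}
    {T : ι → Set (ℝ × ℝ)} {w h : ι → ℝ} (hT : ∀ i, IsRect (T i) (w i) (h i))
    (hratio : ∀ i, w i / h i ∈ ratios ∨ h i / w i ∈ ratios) (hcover : ⋃ i, T i = R)
    (hdisj : Pairwise fun i j ↦ Disjoint (interior (T i)) (interior (T j))) :
    TiledBy R ratios := by
  obtain ⟨m, ⟨e⟩⟩ := Finite.exists_equiv_fin ι
  exact ⟨m, T ∘ e.symm, w ∘ e.symm, h ∘ e.symm, fun _ ↦ hT _, fun _ ↦ hratio _,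
    (e.symm.surjective.iUnion_comp T).trans hcover, hdisj.comp_of_injective e.symm.injective⟩

theorem tiledBy_grid {ratios : Set ℝ} {f g : ℕ → ℝ} (hf : StrictMono f) (hg : StrictMono g)
    {m n : ℕ} (hm : 0 < m) (hn : 0 < n)
    (hratio : ∀ i < m, ∀ j < n, (f (i + 1) - f i) / (g (j + 1) - g j) ∈ ratios ∨
      (g (j + 1) - g j) / (f (i + 1) - f i) ∈ ratios) :
    TiledBy (Set.Icc (f 0) (f m) ×ˢ Set.Icc (g 0) (g n)) ratios := by
  refine tiledBy_of_finite (ι := Set.Ico 0 m × Set.Ico 0 n)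
    (fun k ↦ isRect_Icc_prod_Icc (hf (Nat.lt_add_one k.1)) (hg (Nat.lt_add_one k.2)))
    (fun k ↦ hratio k.1 k.1.2.2 k.2 k.2.2.2) ?_ ?_
  · rw [← biUnion_Ico_Icc_map_succ hf.monotone hm, ← biUnion_Ico_Icc_map_succ hg.monotone hn,
      Set.biUnion_eq_iUnion, Set.biUnion_eq_iUnion]
    exact Set.iUnion_prod (fun i : Set.Ico 0 m ↦ Set.Icc (f i) (f (i + 1)))
      fun j : Set.Ico 0 n ↦ Set.Icc (g j) (g (j + 1))
  · exact (pairwise_disjoint_interior_prod (pairwise_disjoint_interior_Icc_map_succ hf.monotone)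
      (pairwise_disjoint_interior_Icc_map_succ hg.monotone)).comp_of_injective
      (Subtype.val_injective.prodMap Subtype.val_injective)

theorem natCast_div_natCast_mul_mem_BSet {ratios : Set ℝ} {x : ℝ} (hx : x ∈ ratios) (hxpos : 0 < x)
    {m n : ℕ} (hm : 0 < m) (hn : 0 < n) : (m : ℝ) / (n * x) ∈ BSet ratios := by
  have hgrid : TiledBy (Set.Icc ((0 : ℕ) : ℝ) m ×ˢ Set.Icc ((0 : ℕ) * x) (n * x)) ratios := by
    refine tiledBy_grid (f := fun i ↦ (i : ℝ)) (g := fun j ↦ (j : ℝ) * x) Nat.strictMono_cast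
      (Nat.strictMono_cast.mul_const hxpos) hm hn fun i _ j _ ↦ Or.inr ?_
    have hcell : (((j + 1 : ℕ) : ℝ) * x - j * x) / (((i + 1 : ℕ) : ℝ) - i) = x := by
      push_cast
      ring
    rwa [hcell]
  refine ⟨_, _, _, isRect_Icc_prod_Icc ?_ ?_, Or.inl ?_, hgrid⟩
  · exact Nat.cast_lt.2 hm
  · gcongr
  · simp only [Nat.cast_zero, zero_mul, sub_zero]

theorem sub_mul_add_mul_sqrt {p : ℝ} (hp : 0 ≤ p) (a b : ℝ) :
    (a - b * √p) * (a + b * √p) = a ^ 2 - b ^ 2 * p := by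
  linear_combination -b ^ 2 * Real.sq_sqrt hp

theorem stmt_6_general {ratios : Set ℝ} {x z : ℝ} {q : ℚ} (hx : x ∈ ratios) (hxpos : 0 < x)
    (hz : 0 < z) (hzx : z * x = q) : z ∈ BSet ratios := by
  have hq : 0 < q := by
    rw [← Rat.cast_pos (K := ℝ), ← hzx]
    positivity
  lift q to ℚ≥0 using hq.le
  have hz_eq : z = (q.num : ℝ) / (q.den * x) := by
    rw [← div_div, ← NNRat.cast_def, eq_div_iff hxpos.ne', hzx]
    norm_cast
  rw [hz_eq]
  exact natCast_div_natCast_mul_mem_BSet hx hxpos (NNRat.num_pos.2 (mod_cast hq)) q.den_pos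

/-- Lemma 4, first part: if `x = a + b√p > 0` and its conjugate `a - b√p > 0`,
then `a - b√p ∈ B(x)`. -/
theorem stmt_6 (p : ℚ) (hp : 0 < p) (hirr : Irrational (Real.sqrt p))
    (a b : ℚ) (x : ℝ) (hx : x = (a : ℝ) + (b : ℝ) * Real.sqrt p)
    (hxpos : 0 < x) (hconj : 0 < (a : ℝ) - (b : ℝ) * Real.sqrt p) :
    (a : ℝ) - (b : ℝ) * Real.sqrt p ∈ BSet {x} := by
  subst hx
  exact stmt_6_general (q := a ^ 2 - b ^ 2 * p) (Set.mem_singleton _) hxpos hconj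
    (by exact_mod_cast sub_mul_add_mul_sqrt (Rat.cast_nonneg.2 hp.le) (a : ℝ) b)
end

section
/- Let p be a positive rational number with √p irrational, and let x₁, …, xₙ be positive real numbers each belonging to ℚ[√p]. Then every element of B(x₁, …, xₙ) belongs to ℚ[√p] and is positive; that is, B(x₁, …, xₙ) ⊆ ℚ[√p] ∩ ℝ⁺. -/
/-!
The indicators of the quadrants `Ici (x, y)` are linearly independent, and the indicator of a
half-open box is an alternating sum of the quadrants at its corners. A tiling by closed boxes
induces a partition into half-open ones, because a point lies in a half-open box exactly when the
points slightly above and to the right of it lie in the closed box. Hence, for an arbitrary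
function `G`, the alternating sum of `G` over the corners of a box is additive under tilings; for
a bilinear `B` this says that `B w h`, summed over the tiles of sides `w`, `h`, gives `B W H` for
the large rectangle. If the tile ratios lie in a field `K`, apply this to
`B w h = f w • h - f h • w` for a `K`-linear functional `f`: it vanishes on every tile, so
`f W • H = f H • W` for all `f`, which forces `W / H ∈ K`.
-/

section Indicator

open Set

theorem linearIndependent_indicator_Ici (R α : Type*) [Ring R] [PartialOrder α] :
    LinearIndependent R fun a : α => (Ici a).indicator (1 : α → R) := by
  rw [linearIndependent_iff]
  intro l hl
  by_contra hne
  obtain ⟨m, hm⟩ := l.support.exists_minimal (Finsupp.support_nonempty_iff.2 hne)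
  have hlm : (Finsupp.linearCombination R (fun a : α => (Ici a).indicator (1 : α → R)) l) m =
      l m := by
    rw [Finsupp.linearCombination_apply, Finsupp.sum_apply', Finsupp.sum, Finset.sum_eq_single m]
    · simp
    · intro a ha ham
      have : ¬ a ≤ m := fun h => ham (hm.eq_of_le ha h)
      simp [this]
    · simp
  exact Finsupp.mem_support_iff.1 hm.prop (by rw [← hlm, hl, Pi.zero_apply])

variable {α β : Type*}

/-- The four corners of the box with opposite corners `(a, c)` and `(b, d)`, as a formal sum in
which each corner carries the sign of its quadrant in the indicator of the half-open box. -/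
noncomputable def boxCorners (a b : α) (c d : β) : α × β →₀ ℤ :=
  .single (a, c) 1 - .single (b, c) 1 - .single (a, d) 1 + .single (b, d) 1

theorem linearCombination_boxCorners {M : Type*} [AddCommGroup M] (G : α × β → M)
    (a b : α) (c d : β) :
    Finsupp.linearCombination ℤ G (boxCorners a b c d) =
      G (a, c) - G (b, c) - G (a, d) + G (b, d) := by
  simp [boxCorners]

variable [LinearOrder α] [LinearOrder β]

theorem linearCombination_indicator_Ici_boxCorners {a b : α} {c d : β} (hab : a ≤ b)
    (hcd : c ≤ d) :
    Finsupp.linearCombination ℤ (fun p : α × β => (Ici p).indicator (1 : α × β → ℤ))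
      (boxCorners a b c d) = (Ico a b ×ˢ Ico c d).indicator 1 := by
  rw [linearCombination_boxCorners]
  ext ⟨x, y⟩
  simp only [Pi.add_apply, Pi.sub_apply, indicator_apply, mem_Ici, Prod.mk_le_mk, mem_prod,
    mem_Ico, Pi.one_apply]
  grind

theorem sum_boxCorners_eq {ι : Type*} [Fintype ι] {a b : ι → α} {c d : ι → β} {A B : α} {C D : β}
    (hab : ∀ i, a i ≤ b i) (hcd : ∀ i, c i ≤ d i) (hAB : A ≤ B) (hCD : C ≤ D)
    (hU : ⋃ i, Ico (a i) (b i) ×ˢ Ico (c i) (d i) = Ico A B ×ˢ Ico C D)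
    (hdisj : Pairwise fun i j =>
      Disjoint (Ico (a i) (b i) ×ˢ Ico (c i) (d i)) (Ico (a j) (b j) ×ˢ Ico (c j) (d j))) :
    ∑ i, boxCorners (a i) (b i) (c i) (d i) = boxCorners A B C D := by
  apply linearIndependent_indicator_Ici ℤ (α × β)
  simp only [map_sum, linearCombination_indicator_Ici_boxCorners, hab, hcd, hAB, hCD]
  rw [← hU]
  have := Finset.indicator_biUnion Finset.univ (fun i => Ico (a i) (b i) ×ˢ Ico (c i) (d i))
    (f := (1 : α × β → ℤ)) fun i _ j _ hij => hdisj hij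
  simpa [Finset.sum_fn] using this.symm

end Indicator

section HalfOpen

open Set Filter Topology

variable {α β : Type*} [LinearOrder α] [TopologicalSpace α] [OrderTopology α]
  [LinearOrder β] [TopologicalSpace β] [OrderTopology β]

theorem eventually_nhdsGT_le_iff_and_lt_iff (x c : α) :
    ∀ᶠ v in 𝓝[>] x, (v ≤ c ↔ x < c) ∧ (v < c ↔ x < c) := by
  rcases lt_or_ge x c with h | h
  · filter_upwards [Ioo_mem_nhdsGT h] with v hv using by simp [h, hv.2, hv.2.le]
  · filter_upwards [self_mem_nhdsWithin] with v (hv : x < v)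
    simp [h.not_gt, (h.trans_lt hv).not_ge, (h.trans_lt hv).not_gt]

theorem eventually_nhdsGT_mem_Icc_iff (x a b : α) :
    ∀ᶠ v in 𝓝[>] x, v ∈ Icc a b ↔ x ∈ Ico a b := by
  filter_upwards [eventually_nhdsGT_le_iff_and_lt_iff x a,
    eventually_nhdsGT_le_iff_and_lt_iff x b] with v ha hb
  rw [mem_Icc, mem_Ico, hb.1, ← not_lt, ha.2, not_lt]

theorem eventually_nhdsGT_mem_Ioo_iff (x a b : α) :
    ∀ᶠ v in 𝓝[>] x, v ∈ Ioo a b ↔ x ∈ Ico a b := by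
  filter_upwards [eventually_nhdsGT_le_iff_and_lt_iff x a,
    eventually_nhdsGT_le_iff_and_lt_iff x b] with v ha hb
  rw [mem_Ioo, mem_Ico, hb.2, ← not_le, ha.1, not_lt]

variable [DenselyOrdered α] [NoMaxOrder α] [DenselyOrdered β] [NoMaxOrder β]

theorem iUnion_Ico_prod_Ico_eq {ι : Type*} [Finite ι] {a b : ι → α} {c d : ι → β}
    {A B : α} {C D : β}
    (hU : ⋃ i, Icc (a i) (b i) ×ˢ Icc (c i) (d i) = Icc A B ×ˢ Icc C D) :
    ⋃ i, Ico (a i) (b i) ×ˢ Ico (c i) (d i) = Ico A B ×ˢ Ico C D := by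
  ext ⟨x, y⟩
  obtain ⟨v, hv, hvAB⟩ := ((eventually_all.2 fun i =>
    eventually_nhdsGT_mem_Icc_iff x (a i) (b i)).and
      (eventually_nhdsGT_mem_Icc_iff x A B)).exists
  obtain ⟨w, hw, hwCD⟩ := ((eventually_all.2 fun i =>
    eventually_nhdsGT_mem_Icc_iff y (c i) (d i)).and
      (eventually_nhdsGT_mem_Icc_iff y C D)).exists
  have hvw := Set.ext_iff.1 hU (v, w)
  simpa only [mem_iUnion, mem_prod, hv, hw, hvAB, hwCD] using hvw

theorem disjoint_Ico_prod_Ico [NoMinOrder α] [NoMinOrder β] {a b a' b' : α} {c d c' d' : β}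
    (h : Disjoint (interior (Icc a b ×ˢ Icc c d)) (interior (Icc a' b' ×ˢ Icc c' d'))) :
    Disjoint (Ico a b ×ˢ Ico c d) (Ico a' b' ×ˢ Ico c' d') := by
  simp only [interior_prod_eq, interior_Icc] at h
  refine disjoint_left.2 fun ⟨x, y⟩ hxy hxy' => ?_
  obtain ⟨v, hv, hv'⟩ := ((eventually_nhdsGT_mem_Ioo_iff x a b).and
    (eventually_nhdsGT_mem_Ioo_iff x a' b')).exists
  obtain ⟨w, hw, hw'⟩ := ((eventually_nhdsGT_mem_Ioo_iff y c d).and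
    (eventually_nhdsGT_mem_Ioo_iff y c' d')).exists
  exact disjoint_left.1 h (mk_mem_prod (hv.2 hxy.1) (hw.2 hxy.2))
    (mk_mem_prod (hv'.2 hxy'.1) (hw'.2 hxy'.2))

end HalfOpen

theorem sum_bilin_sides_eq_of_tiling {R M ι : Type*} [CommRing R] [Module R ℝ]
    [AddCommGroup M] [Module R M] [Fintype ι] (B : ℝ →ₗ[R] ℝ →ₗ[R] M) {T : ι → Set (ℝ × ℝ)}
    {w h : ι → ℝ} {Q : Set (ℝ × ℝ)} {W H : ℝ} (hT : ∀ i, IsRect (T i) (w i) (h i))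
    (hQ : IsRect Q W H) (hU : ⋃ i, T i = Q)
    (hdisj : Pairwise fun i j => Disjoint (interior (T i)) (interior (T j))) :
    ∑ i, B (w i) (h i) = B W H := by
  choose hw hh a c hTe using hT
  obtain ⟨hW, hH, A, C, rfl⟩ := hQ
  obtain rfl := funext hTe
  have hcorners := sum_boxCorners_eq (fun i => le_add_of_nonneg_right (hw i).le)
    (fun i => le_add_of_nonneg_right (hh i).le) (le_add_of_nonneg_right hW.le)
    (le_add_of_nonneg_right hH.le) (iUnion_Ico_prod_Ico_eq hU)
    (fun i j hij => disjoint_Ico_prod_Ico (hdisj hij))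
  have hB (a w c h : ℝ) : Finsupp.linearCombination ℤ (fun p : ℝ × ℝ => B p.1 p.2)
      (boxCorners a (a + w) c (c + h)) = B w h := by
    rw [linearCombination_boxCorners]
    simp only [map_add, LinearMap.add_apply]
    abel
  simpa only [map_sum, hB] using
    congrArg (Finsupp.linearCombination ℤ fun p : ℝ × ℝ => B p.1 p.2) hcorners

theorem mem_span_singleton_of_forall_dual_smul_eq {K V : Type*} [DivisionRing K] [AddCommGroup V]
    [Module K V] {x y : V} (hy : y ≠ 0) (hxy : ∀ f : Module.Dual K V, f x • y = f y • x) :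
    x ∈ Submodule.span K {y} := by
  by_contra hx
  obtain ⟨f, hfx, hf⟩ := Submodule.exists_le_ker_of_notMem hx
  have hfy : f y = 0 := hf (Submodule.mem_span_singleton_self y)
  have := hxy f
  rw [hfy, zero_smul] at this
  exact smul_ne_zero hfx hy this

theorem TiledBy.div_mem {K : Subfield ℝ} {ratios : Set ℝ} (hK : ratios ⊆ K) {Q : Set (ℝ × ℝ)}
    {W H : ℝ} (hQ : IsRect Q W H) (hT : TiledBy Q ratios) : W / H ∈ K := by
  obtain ⟨m, T, w, h, hT, hratio, hU, hdisj⟩ := hT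
  have hwh (i : Fin m) : ∃ k : K, w i = k • h i := by
    have hmem : w i / h i ∈ K := (hratio i).elim (fun hi => hK hi) fun hi => by
      simpa only [inv_div] using K.inv_mem (hK hi)
    exact ⟨⟨_, hmem⟩, (div_mul_cancel₀ (w i) (hT i).2.1.ne').symm⟩
  have hdual (f : Module.Dual K ℝ) : f W • H = f H • W := by
    let B : ℝ →ₗ[K] ℝ →ₗ[K] ℝ := LinearMap.lsmul K ℝ ∘ₗ f
    have htile (i : Fin m) : (B - B.flip) (w i) (h i) = 0 := by
      obtain ⟨k, hk⟩ := hwh i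
      simp [B, hk]
    have hsum := sum_bilin_sides_eq_of_tiling (B - B.flip) hT hQ hU hdisj
    rw [Finset.sum_eq_zero fun i _ => htile i] at hsum
    exact sub_eq_zero.1 hsum.symm
  have hH : H ≠ 0 := hQ.2.1.ne'
  obtain ⟨k, rfl⟩ := Submodule.mem_span_singleton.1
    (mem_span_singleton_of_forall_dual_smul_eq hH hdual)
  rw [Subfield.smul_def, smul_eq_mul, mul_div_cancel_right₀ _ hH]
  exact k.2

open IntermediateField in
theorem mem_adjoin_simple_iff_of_sq_eq {F L : Type*} [Field F] [Field L] [Algebra F L] {s : L}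
    {a : F} (hs : s ^ 2 = algebraMap F L a) {y : L} :
    y ∈ F⟮s⟯ ↔ ∃ c d : F, y = algebraMap F L c + algebraMap F L d * s := by
  constructor
  · intro hy
    have hint : IsIntegral F s := .of_pow two_pos (hs ▸ isIntegral_algebraMap)
    rw [← mem_toSubalgebra, adjoin_simple_toSubalgebra_of_isAlgebraic hint.isAlgebraic] at hy
    induction hy using Algebra.adjoin_induction with
    | mem x hx => exact ⟨0, 1, by simpa using hx⟩
    | algebraMap c => exact ⟨c, 0, by simp⟩
    | add _ _ _ _ hx hy =>
      obtain ⟨c, d, rfl⟩ := hx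
      obtain ⟨c', d', rfl⟩ := hy
      exact ⟨c + c', d + d', by simp only [map_add]; ring⟩
    | mul _ _ _ _ hx hy =>
      obtain ⟨c, d, rfl⟩ := hx
      obtain ⟨c', d', rfl⟩ := hy
      refine ⟨c * c' + d * d' * a, c * d' + d * c', ?_⟩
      simp only [map_add, map_mul]
      linear_combination algebraMap F L d * algebraMap F L d' * hs
  · rintro ⟨c, d, rfl⟩
    exact add_mem (IntermediateField.algebraMap_mem _ c)
      (mul_mem (IntermediateField.algebraMap_mem _ d) (mem_adjoin_simple_self F s))

theorem stmt_9_general (K : Subfield ℝ) {ratios : Set ℝ} (hK : ratios ⊆ K) :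
    BSet ratios ⊆ K ∩ Set.Ioi 0 := by
  rintro z ⟨W, H, Q, hQ, hz, hT⟩
  have hWH : W / H ∈ K := hT.div_mem hK hQ
  have hpos : 0 < W / H := div_pos hQ.1 hQ.2.1
  rcases hz with rfl | rfl
  · exact ⟨hWH, hpos⟩
  · rw [← inv_div]
    exact ⟨K.inv_mem hWH, inv_pos.2 hpos⟩

/-- Lemma 6: if `x₁, …, xₙ ∈ ℚ[√p] ∩ ℝ⁺`, then `B(x₁, …, xₙ) ⊆ ℚ[√p] ∩ ℝ⁺`. -/
theorem stmt_9 (p : ℚ) (hp : 0 < p) (hirr : Irrational (Real.sqrt p))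
    (n : ℕ) (x : Fin n → ℝ) (hxpos : ∀ i, 0 < x i)
    (hxq : ∀ i, ∃ c d : ℚ, x i = (c : ℝ) + (d : ℝ) * Real.sqrt p) :
    ∀ z ∈ BSet (Set.range x),
      (∃ e f : ℚ, z = (e : ℝ) + (f : ℝ) * Real.sqrt p) ∧ 0 < z := by
  have hmem {y : ℝ} := mem_adjoin_simple_iff_of_sq_eq (F := ℚ) (y := y)
    (Real.sq_sqrt (Rat.cast_nonneg.2 hp.le))
  exact fun z hz => (stmt_9_general (IntermediateField.adjoin ℚ {√(p : ℝ)}).toSubfield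
    (Set.range_subset_iff.2 fun i => hmem.2 (hxq i)) hz).imp_left hmem.1
end
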